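/- The exponential loss ℓ(α) = exp(−α) is not order-preserving for pointwise risks under class-conditional label noise: there exist a probability space, a random feature vector X, a {0,1}-valued random label Y, a noise level γ ∈ (1/2, 1], a {0,1}-valued random variable ε independent of (X, Y) with P(ε = 1) = γ defining the noisy label Ỹ = εY + (1−ε)(1−Y), and two measurable scorers f, g with all four risks L(f), L(g), L̃(f), L̃(g) finite, such that L̃(f) − L̃(g) ≠ (2γ−1)·(L(f) − L(g)). -/

import Mathlib

/-!
Independent symmetric label noise mixes the clean risk with the risk under the complementary
label: `L̃(f) = γ L(f) + (1 - γ) L'(f)`, where `L'` uses `1 - Y` in place of `Y`. As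
`L(f) + L'(f) = 𝔼[ℓ(f(X)) + ℓ(-f(X))]`, `L̃(f) - L̃(g)` and
`(2γ - 1)(L(f) - L(g))` differ by `1 - γ` times the change in this symmetrized expectation
between `f` and `g`. For the exponential loss it equals `2 𝔼[cosh(f(X))]`, which distinguishes
the constant scorers `1` and `0`.
-/

open MeasureTheory ProbabilityTheory

/-- The label `y ∈ {0, 1}` observed through noise `e ∈ {0, 1}`, where `e = 1` keeps the label and
`e = 0` flips it; this is the polynomial `Ỹ = εY + (1 - ε)(1 - Y)`, with labels encoded as reals. -/
def noisyLabel (e y : ℝ) : ℝ := e * y + (1 - e) * (1 - y)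

/-- The pointwise risk `𝔼[ℓ(f(X)(2Y - 1))]` of the scorer `f` under the loss `ℓ`. Labels are real
random variables with values in `{0, 1}`, so that clean, noisy and complementary labels can all
be used for `Y`. -/
noncomputable def pointwiseRisk {Ω 𝒳 : Type*} [MeasurableSpace Ω] (P : Measure Ω) (ℓ : ℝ → ℝ)
    (X : Ω → 𝒳) (Y : Ω → ℝ) (f : 𝒳 → ℝ) : ℝ :=
  ∫ ω, ℓ (f (X ω) * (2 * Y ω - 1)) ∂P

theorem apply_noisyLabel (φ : ℝ → ℝ) {e : ℝ} (he : e = 0 ∨ e = 1) (y : ℝ) :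
    φ (noisyLabel e y) = e * φ y + (1 - e) * φ (1 - y) := by
  rcases he with rfl | rfl <;> simp [noisyLabel]

section Risk

variable {Ω 𝒳 : Type*} [MeasurableSpace Ω] {P : Measure Ω}
  {ℓ : ℝ → ℝ} {X : Ω → 𝒳} {Y e : Ω → ℝ} {f : 𝒳 → ℝ}

theorem pointwiseRisk_add_pointwiseRisk_one_sub (hY01 : ∀ᵐ ω ∂P, Y ω = 0 ∨ Y ω = 1)
    (hY : Integrable (fun ω => ℓ (f (X ω) * (2 * Y ω - 1))) P)
    (hY' : Integrable (fun ω => ℓ (f (X ω) * (2 * (1 - Y ω) - 1))) P) :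
    pointwiseRisk P ℓ X Y f + pointwiseRisk P ℓ X (fun ω => 1 - Y ω) f
      = ∫ ω, (ℓ (f (X ω)) + ℓ (-f (X ω))) ∂P := by
  rw [pointwiseRisk, pointwiseRisk, ← integral_add hY hY']
  refine integral_congr_ae ?_
  filter_upwards [hY01] with ω hω
  rcases hω with h | h <;> norm_num [h, add_comm]

variable [IsProbabilityMeasure P]

theorem integral_mul_add_one_sub_mul_of_indepFun {U V : Ω → ℝ} (he : Integrable e P)
    (hU : Integrable U P) (hV : Integrable V P) (heU : IndepFun e U P) (heV : IndepFun e V P) :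
    ∫ ω, (e ω * U ω + (1 - e ω) * V ω) ∂P
      = (∫ ω, e ω ∂P) * (∫ ω, U ω ∂P) + (1 - ∫ ω, e ω ∂P) * ∫ ω, V ω ∂P := by
  have he' : Integrable (fun ω => 1 - e ω) P := (integrable_const 1).sub he
  have heV' : IndepFun (fun ω => 1 - e ω) V P :=
    heV.comp (measurable_const.sub measurable_id) measurable_id
  calc ∫ ω, (e ω * U ω + (1 - e ω) * V ω) ∂P
      = (∫ ω, e ω * U ω ∂P) + ∫ ω, (1 - e ω) * V ω ∂P :=
        integral_add (heU.integrable_mul he hU) (heV'.integrable_mul he' hV)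
    _ = (∫ ω, e ω ∂P) * (∫ ω, U ω ∂P) + (∫ ω, (1 - e ω) ∂P) * ∫ ω, V ω ∂P := by
        rw [heU.integral_fun_mul_eq_mul_integral he.1 hU.1,
          heV'.integral_fun_mul_eq_mul_integral he'.1 hV.1]
    _ = _ := by
        rw [integral_sub (integrable_const 1) he, integral_const, probReal_univ, one_smul]

variable [MeasurableSpace 𝒳]

theorem pointwiseRisk_noisyLabel (hℓ : Measurable ℓ) (hf : Measurable f)
    (he : AEMeasurable e P) (he01 : ∀ᵐ ω ∂P, e ω = 0 ∨ e ω = 1)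
    (hind : IndepFun (fun ω => (X ω, Y ω)) e P)
    (hY : Integrable (fun ω => ℓ (f (X ω) * (2 * Y ω - 1))) P)
    (hY' : Integrable (fun ω => ℓ (f (X ω) * (2 * (1 - Y ω) - 1))) P) :
    pointwiseRisk P ℓ X (fun ω => noisyLabel (e ω) (Y ω)) f
      = (∫ ω, e ω ∂P) * pointwiseRisk P ℓ X Y f
        + (1 - ∫ ω, e ω ∂P) * pointwiseRisk P ℓ X (fun ω => 1 - Y ω) f := by
  have he_int : Integrable e P := by
    refine .of_bound he.aestronglyMeasurable 1 ?_
    filter_upwards [he01] with ω hω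
    rcases hω with h | h <;> simp [h]
  have hind_clean : IndepFun e (fun ω => ℓ (f (X ω) * (2 * Y ω - 1))) P :=
    (hind.comp (φ := fun p : 𝒳 × ℝ => ℓ (f p.1 * (2 * p.2 - 1))) (by fun_prop)
      measurable_id).symm
  have hind_flip : IndepFun e (fun ω => ℓ (f (X ω) * (2 * (1 - Y ω) - 1))) P :=
    (hind.comp (φ := fun p : 𝒳 × ℝ => ℓ (f p.1 * (2 * (1 - p.2) - 1))) (by fun_prop)
      measurable_id).symm
  rw [pointwiseRisk, pointwiseRisk, pointwiseRisk,
    ← integral_mul_add_one_sub_mul_of_indepFun he_int hY hY' hind_clean hind_flip]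
  refine integral_congr_ae ?_
  filter_upwards [he01] with ω hω
  exact apply_noisyLabel (fun y => ℓ (f (X ω) * (2 * y - 1))) hω (Y ω)

theorem pointwiseRisk_noisyLabel_eq_add_symmetrized (hℓ : Measurable ℓ) (hf : Measurable f)
    (he : AEMeasurable e P) (he01 : ∀ᵐ ω ∂P, e ω = 0 ∨ e ω = 1)
    (hY01 : ∀ᵐ ω ∂P, Y ω = 0 ∨ Y ω = 1)
    (hind : IndepFun (fun ω => (X ω, Y ω)) e P)
    (hY : Integrable (fun ω => ℓ (f (X ω) * (2 * Y ω - 1))) P)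
    (hY' : Integrable (fun ω => ℓ (f (X ω) * (2 * (1 - Y ω) - 1))) P) :
    pointwiseRisk P ℓ X (fun ω => noisyLabel (e ω) (Y ω)) f
      = (2 * (∫ ω, e ω ∂P) - 1) * pointwiseRisk P ℓ X Y f
        + (1 - ∫ ω, e ω ∂P) * ∫ ω, (ℓ (f (X ω)) + ℓ (-f (X ω))) ∂P := by
  rw [pointwiseRisk_noisyLabel hℓ hf he he01 hind hY hY',
    ← pointwiseRisk_add_pointwiseRisk_one_sub hY01 hY hY']
  ring

theorem pointwiseRisk_exp_noisyLabel (hf : Measurable f)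
    (he : AEMeasurable e P) (he01 : ∀ᵐ ω ∂P, e ω = 0 ∨ e ω = 1)
    (hY01 : ∀ᵐ ω ∂P, Y ω = 0 ∨ Y ω = 1)
    (hind : IndepFun (fun ω => (X ω, Y ω)) e P)
    (hY : Integrable (fun ω => Real.exp (-(f (X ω) * (2 * Y ω - 1)))) P)
    (hY' : Integrable (fun ω => Real.exp (-(f (X ω) * (2 * (1 - Y ω) - 1)))) P) :
    pointwiseRisk P (fun α => Real.exp (-α)) X (fun ω => noisyLabel (e ω) (Y ω)) f
      = (2 * (∫ ω, e ω ∂P) - 1) * pointwiseRisk P (fun α => Real.exp (-α)) X Y f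
        + 2 * (1 - ∫ ω, e ω ∂P) * ∫ ω, Real.cosh (f (X ω)) ∂P := by
  have exp_symmetrized (t : ℝ) : Real.exp (-t) + Real.exp (- -t) = 2 * Real.cosh t := by
    rw [Real.cosh_eq, neg_neg]
    ring
  rw [pointwiseRisk_noisyLabel_eq_add_symmetrized (by fun_prop) hf he he01 hY01 hind hY hY']
  simp only [exp_symmetrized, integral_const_mul]
  ring

end Risk

section Bernoulli

open unitInterval

theorem integral_ite_bernoulliMeasure (p : I) :
    ∫ b, (if b then 1 else 0 : ℝ) ∂Ber(true, false, p) = p := by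
  simp [integral_bernoulliMeasure]

theorem bernoulliMeasure_setOf_ite_eq_one (p : I) :
    Ber(true, false, p) {b | (if b then 1 else 0 : ℝ) = 1} = ENNReal.ofReal p := by
  rw [bernoulliMeasure_apply_of_mem_of_notMem p .of_discrete (by simp) (by simp)]
  exact ENNReal.ofReal_coe_nnreal.symm

end Bernoulli

/-- The exponential loss `ℓ(α) = exp(-α)` is not order-preserving for
pointwise risks under class-conditional label noise: there exist a probability space,
features `X`, a `{0,1}`-valued label `Y`, `γ ∈ (1/2, 1]`, noise `ε ⟂ (X,Y)` with
`P(ε=1) = γ` (defining `Ỹ = εY + (1-ε)(1-Y)`), and scorers `f, g` with all four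
risks finite, such that `L̃(f) - L̃(g) ≠ (2γ-1)(L(f) - L(g))`. -/
theorem exp_loss_not_order_preserving :
    ∃ (Ω : Type) (_ : MeasurableSpace Ω) (P : Measure Ω) (𝒳 : Type)
      (_ : MeasurableSpace 𝒳) (X : Ω → 𝒳) (Y e : Ω → ℝ) (γ : ℝ) (f g : 𝒳 → ℝ),
      IsProbabilityMeasure P ∧
      Measurable X ∧ Measurable Y ∧ Measurable e ∧ Measurable f ∧ Measurable g ∧
      (∀ ω, Y ω = 0 ∨ Y ω = 1) ∧ (∀ ω, e ω = 0 ∨ e ω = 1) ∧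
      γ ∈ Set.Ioc (1 / 2 : ℝ) 1 ∧
      IndepFun (fun ω => (X ω, Y ω)) e P ∧
      P {ω | e ω = 1} = ENNReal.ofReal γ ∧
      Integrable (fun ω => Real.exp (-(f (X ω) * (2 * Y ω - 1)))) P ∧
      Integrable (fun ω => Real.exp (-(g (X ω) * (2 * Y ω - 1)))) P ∧
      Integrable (fun ω => Real.exp
        (-(f (X ω) * (2 * (e ω * Y ω + (1 - e ω) * (1 - Y ω)) - 1)))) P ∧
      Integrable (fun ω => Real.exp
        (-(g (X ω) * (2 * (e ω * Y ω + (1 - e ω) * (1 - Y ω)) - 1)))) P ∧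
      (∫ ω, Real.exp (-(f (X ω) * (2 * (e ω * Y ω + (1 - e ω) * (1 - Y ω)) - 1))) ∂P)
        - (∫ ω, Real.exp (-(g (X ω) * (2 * (e ω * Y ω + (1 - e ω) * (1 - Y ω)) - 1))) ∂P)
        ≠ (2 * γ - 1)
          * ((∫ ω, Real.exp (-(f (X ω) * (2 * Y ω - 1))) ∂P)
              - (∫ ω, Real.exp (-(g (X ω) * (2 * Y ω - 1))) ∂P)) := by
  let p : unitInterval := ⟨3 / 4, by norm_num, by norm_num⟩
  let P : Measure Bool := bernoulliMeasure true false p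
  let e : Bool → ℝ := fun b => if b then 1 else 0
  have he01 (b : Bool) : e b = 0 ∨ e b = 1 := by cases b <;> simp [e]
  have hmean : ∫ b, e b ∂P = 3 / 4 := integral_ite_bernoulliMeasure p
  have hnoisy (c : ℝ) := pointwiseRisk_exp_noisyLabel (P := P) (X := fun _ => ()) (Y := fun _ => 1)
    (f := fun _ => c) measurable_const (measurable_of_finite e).aemeasurable (.of_forall he01)
    (.of_forall fun _ => .inr rfl) (indepFun_const_left _ _) .of_finite .of_finite
  refine ⟨Bool, inferInstance, P, Unit, inferInstance, fun _ => (), fun _ => 1, e, 3 / 4,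
    fun _ => 1, fun _ => 0, inferInstance, measurable_const, measurable_const,
    measurable_of_finite e, measurable_const, measurable_const, fun _ => .inr rfl, he01,
    by norm_num, indepFun_const_left _ _, bernoulliMeasure_setOf_ite_eq_one p,
    .of_finite, .of_finite, .of_finite, .of_finite, fun horder => ?_⟩
  have hcosh : Real.cosh 0 < Real.cosh 1 := by simp
  simp only [hmean, integral_const, probReal_univ, one_smul, pointwiseRisk, noisyLabel] at hnoisy
  simp only [integral_const, probReal_univ, one_smul] at horder
  rw [hnoisy 1, hnoisy 0] at horder
  linarith
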